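/- There exist an ISCG, a partition coalition structure C, and a feasible allocation a such that a is a Nash equilibrium, Pareto efficient, and C-stable, yet a is not maximal with respect to the C-balance dominance relation. Specifically: in the ISCG with two resources and fifteen agents where both resources are accessible to every agent, with C = {{1,2,3},{4,5,6},{7,8,9},{10,11,12},{13,14,15}}, the allocation a with a₁ = {1,2,4,5,7,8,10,11} and a₂ = {3,6,9,12,13,14,15} is a Nash equilibrium, Pareto efficient, and C-stable, but the allocation ā with ā₁ = {1,2,4,7,8,10,13,14} and ā₂ = {3,5,6,9,11,12,15} C-balance dominates a. -/

import Mathlib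

/-!
A blocking deviation of a coalition `c` strictly lowers the joint congestion of its members, which
equals `∑ i, |c ∩ a i| * |a i|`. Only the numbers `|c ∩ a i|` vary, with a fixed sum `|c|`, while
the number `|a i \ c|` of outsiders is fixed; so this is a separable convex function of the
occupation numbers. It is minimal as soon as moving a single agent does not decrease it, i.e. if
`|c ∩ a i| + |a i| ≤ |c ∩ a k| + |a k| + 2` for all resources `i` and `k`. If the loads of `a`
differ by at most one, then singletons and the grand coalition satisfy this condition; in the
example, with loads `8` and `7`, so does every coalition of the partition.
The allocation `ā` has the same loads as `a` and spreads one coalition more evenly.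
-/

variable {N M : Type*} [Fintype N] [DecidableEq N] [Fintype M] [DecidableEq M]

/-- `a` is an allocation: resources hold pairwise disjoint sets of agents whose union is `N`. -/
def IsAllocation (a : M → Finset N) : Prop :=
  (∀ i₁ i₂ : M, i₁ ≠ i₂ → Disjoint (a i₁) (a i₂)) ∧ (∀ j : N, ∃ i : M, j ∈ a i)

/-- `a` respects the feasibility constraint `f`. -/
def Feasible (f a : M → Finset N) : Prop := ∀ i : M, a i ⊆ f i

/-- Coalition `c` blocks allocation `a` via the (feasible) allocation `abar`. -/
def BlocksVia (f : M → Finset N) (c : Finset N) (a abar : M → Finset N) : Prop :=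
  IsAllocation abar ∧ Feasible f abar ∧
  (∀ i : M, a i \ c = abar i \ c) ∧
  (∀ j ∈ c, ∀ i₁ i₂ : M, j ∈ a i₁ → j ∈ abar i₂ → (abar i₂).card ≤ (a i₁).card) ∧
  (∃ j ∈ c, ∃ i₁ i₂ : M, j ∈ a i₁ ∧ j ∈ abar i₂ ∧ (abar i₂).card < (a i₁).card)

/-- Coalition `c` blocks allocation `a`. -/
def Blocks (f : M → Finset N) (c : Finset N) (a : M → Finset N) : Prop :=
  ∃ abar : M → Finset N, BlocksVia f c a abar

/-- The kernel of `a`: the list of resource cardinalities, in nonincreasing order. -/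
def kernel (a : M → Finset N) : List ℕ :=
  ((Finset.univ.val.map fun i : M => (a i).card).sort (· ≤ ·)).reverse

/-- The `c`-kernel of `a`: the list `(|c ∩ a i|)_{i ∈ M}`, in nonincreasing order. -/
def ckernel (c : Finset N) (a : M → Finset N) : List ℕ :=
  ((Finset.univ.val.map fun i : M => (c ∩ a i).card).sort (· ≤ ·)).reverse

/-- The `c`-welfare-kernel of `a`: the list `(|c_n|, |c_{n-1}|, …, |c_1|)`, where `c_s` is the set
of members of `c` assigned to a resource of cardinality `s`, and `n` is the number of agents. -/
def wkernel (c : Finset N) (a : M → Finset N) : List ℕ :=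
  (List.range (Fintype.card N)).map fun t =>
    (c.filter fun j => ∃ i : M, j ∈ a i ∧ (a i).card = Fintype.card N - t).card

/-- `a` C-balance dominates `abar`. -/
def BalanceDominates (C : Set (Finset N)) (a abar : M → Finset N) : Prop :=
  List.Lex (· < ·) (kernel a) (kernel abar) ∨
  (kernel a = kernel abar ∧
    (∀ c ∈ C, ckernel c a = ckernel c abar ∨ List.Lex (· < ·) (ckernel c a) (ckernel c abar)) ∧
    (∃ c ∈ C, List.Lex (· < ·) (ckernel c a) (ckernel c abar)))

/-- `C` is a partition coalition structure. -/
def IsPartitionStructure (C : Set (Finset N)) : Prop :=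
  (∀ c ∈ C, c.Nonempty) ∧
  (∀ c ∈ C, ∀ c' ∈ C, c ≠ c' → Disjoint c c') ∧
  (∀ j : N, ∃ c ∈ C, j ∈ c)

/-- The allocation of Example 2: `a₁ = {1,2,4,5,7,8,10,11}`, `a₂ = {3,6,9,12,13,14,15}`
(agent `k` is encoded as `k - 1 : Fin 15`). -/
def exAlloc : Fin 2 → Finset (Fin 15)
  | 0 => {0, 1, 3, 4, 6, 7, 9, 10}
  | 1 => {2, 5, 8, 11, 12, 13, 14}

/-- The allocation `ā` of Example 2: `ā₁ = {1,2,4,7,8,10,13,14}`, `ā₂ = {3,5,6,9,11,12,15}`. -/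
def exAllocBar : Fin 2 → Finset (Fin 15)
  | 0 => {0, 1, 3, 6, 7, 9, 12, 13}
  | 1 => {2, 4, 5, 8, 10, 11, 14}

/-- The coalition structure `C = {{1,2,3},{4,5,6},{7,8,9},{10,11,12},{13,14,15}}`. -/
def exC : Set (Finset (Fin 15)) :=
  {{0, 1, 2}, {3, 4, 5}, {6, 7, 8}, {9, 10, 11}, {12, 13, 14}}

/-- All resources are accessible to every agent. -/
def exF : Fin 2 → Finset (Fin 15) := fun _ => Finset.univ

section Deviations

variable {α ι : Type*} [DecidableEq α] {f a b : ι → Finset α} {c : Finset α}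

/-- The allocation `a` is balanced if any two of its loads differ by at most one. -/
def IsBalanced (a : ι → Finset α) : Prop := ∀ i k, (a i).card ≤ (a k).card + 1

section Congestion

variable [Fintype ι]

/-- The congestion suffered by agent `j` under `a`, i.e. the load of the resource holding `j`.
Writing it as a sum over the resources holding `j` (exactly one if `a` is an allocation) makes it
total and computable. -/
def congestion (a : ι → Finset α) (j : α) : ℕ := ∑ i with j ∈ a i, (a i).card

lemma IsAllocation.filter_mem_eq_singleton (ha : IsAllocation a) {i : ι} {j : α} (hj : j ∈ a i) :
    ({k | j ∈ a k} : Finset ι) = {i} := by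
  ext k
  simp only [Finset.mem_filter_univ, Finset.mem_singleton]
  refine ⟨fun hk => ?_, fun hki => hki ▸ hj⟩
  by_contra hki
  exact Finset.disjoint_left.1 (ha.1 k i hki) hk hj

lemma IsAllocation.congestion_eq_card (ha : IsAllocation a) {i : ι} {j : α} (hj : j ∈ a i) :
    congestion a j = (a i).card := by
  rw [congestion, ha.filter_mem_eq_singleton hj, Finset.sum_singleton]

lemma sum_sum_filter_mem {R : Type*} [AddCommMonoid R] (a : ι → Finset α) (c : Finset α)
    (g : ι → R) : ∑ j ∈ c, ∑ i with j ∈ a i, g i = ∑ i, (c ∩ a i).card • g i := by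
  simp only [Finset.sum_filter]
  rw [Finset.sum_comm]
  simp only [Finset.sum_ite_mem, Finset.sum_const]

lemma sum_congestion (a : ι → Finset α) (c : Finset α) :
    ∑ j ∈ c, congestion a j = ∑ i, (c ∩ a i).card * (a i).card :=
  sum_sum_filter_mem a c fun i => (a i).card

lemma IsAllocation.sum_card_inter (ha : IsAllocation a) (c : Finset α) :
    ∑ i, (c ∩ a i).card = c.card := by
  have hcount := sum_sum_filter_mem a c fun _ => 1
  simp only [smul_eq_mul, mul_one] at hcount
  rw [← hcount, Finset.card_eq_sum_ones]
  refine Finset.sum_congr rfl fun j _ => ?_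
  obtain ⟨i, hi⟩ := ha.2 j
  rw [ha.filter_mem_eq_singleton hi, Finset.sum_singleton]

lemma BlocksVia.sum_congestion_lt (ha : IsAllocation a) (h : BlocksVia f c a b) :
    ∑ j ∈ c, congestion b j < ∑ j ∈ c, congestion a j := by
  obtain ⟨hb, -, -, hle, j, hjc, i, k, hji, hjk, hlt⟩ := h
  refine Finset.sum_lt_sum (fun l hlc => ?_) ⟨j, hjc, ?_⟩
  · obtain ⟨p, hp⟩ := ha.2 l
    obtain ⟨q, hq⟩ := hb.2 l
    rw [ha.congestion_eq_card hp, hb.congestion_eq_card hq]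
    exact hle l hlc p q hp hq
  · rwa [ha.congestion_eq_card hji, hb.congestion_eq_card hjk]

lemma sum_mul_add_self_nonneg {d w : ι → ℤ} (hd : ∑ i, d i = 0) (hw : ∀ i k, w i ≤ w k + 2) :
    0 ≤ ∑ i, d i * (w i + d i) := by
  cases isEmpty_or_nonempty ι
  · simp
  obtain ⟨k, hk⟩ := Finite.exists_min w
  -- All `w i` lie in `[w k, w k + 2]`. Since `∑ d = 0`, recentring `w` at the midpoint does not
  -- change the sum, and it makes every summand nonnegative because the `d i` are integers.
  calc 0 ≤ ∑ i, d i * (w i - (w k + 1) + d i) := Finset.sum_nonneg fun i _ => ?_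
    _ = ∑ i, d i * (w i + d i) - (∑ i, d i) * (w k + 1) := by
        rw [Finset.sum_mul, ← Finset.sum_sub_distrib]
        exact Finset.sum_congr rfl fun i _ => by ring
    _ = ∑ i, d i * (w i + d i) := by rw [hd, zero_mul, sub_zero]
  have hlower : -1 ≤ w i - (w k + 1) := by linarith [hk i]
  have hupper : w i - (w k + 1) ≤ 1 := by linarith [hw i k]
  rcases lt_trichotomy (d i) 0 with hneg | hzero | hpos
  · exact mul_nonneg_of_nonpos_of_nonpos hneg.le (by omega)
  · simp [hzero]
  · exact mul_nonneg hpos.le (by omega)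

-- Moving one agent of `c` from `i` to `k` lowers the joint congestion of `c` by
-- `(|c ∩ a i| + |a i| - 1) - (|c ∩ a k| + |a k| + 1)`, hence the constant `2`.
theorem sum_congestion_le_of_card_inter_add_card_le (ha : IsAllocation a) (hb : IsAllocation b)
    (hfix : ∀ i, a i \ c = b i \ c)
    (h : ∀ i k, (c ∩ a i).card + (a i).card ≤ (c ∩ a k).card + (a k).card + 2) :
    ∑ j ∈ c, congestion a j ≤ ∑ j ∈ c, congestion b j := by
  let d (i : ι) : ℤ := (c ∩ b i).card - (c ∩ a i).card
  have hd : ∑ i, d i = 0 := by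
    simp only [d, Finset.sum_sub_distrib, ← Nat.cast_sum, ha.sum_card_inter, hb.sum_card_inter,
      sub_self]
  have hload (i : ι) : ((b i).card : ℤ) = (a i).card + d i := by
    have hca := Finset.card_inter_add_card_sdiff (a i) c
    have hcb := Finset.card_inter_add_card_sdiff (b i) c
    rw [Finset.inter_comm] at hca hcb
    rw [hfix i] at hca
    simp only [d]
    omega
  have hterm (i : ι) : ((c ∩ b i).card * (b i).card : ℤ) - (c ∩ a i).card * (a i).card =
      d i * ((c ∩ a i).card + (a i).card + d i) := by
    rw [hload i]
    simp only [d]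
    ring
  rw [sum_congestion, sum_congestion]
  zify
  rw [← sub_nonneg, ← Finset.sum_sub_distrib]
  simp only [hterm]
  exact sum_mul_add_self_nonneg hd fun i k => mod_cast h i k

end Congestion

variable [Finite ι]

theorem not_blocks_of_card_inter_add_card_le (ha : IsAllocation a)
    (h : ∀ i k, (c ∩ a i).card + (a i).card ≤ (c ∩ a k).card + (a k).card + 2) :
    ¬ Blocks f c a := by
  cases nonempty_fintype ι
  rintro ⟨b, hblocks⟩
  have hlt := hblocks.sum_congestion_lt ha
  obtain ⟨hb, -, hfix, -⟩ := hblocks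
  exact hlt.not_ge (sum_congestion_le_of_card_inter_add_card_le ha hb hfix h)

theorem IsBalanced.not_blocks_singleton (hbal : IsBalanced a) (ha : IsAllocation a) (j : α) :
    ¬ Blocks f {j} a := by
  refine not_blocks_of_card_inter_add_card_le ha fun i k => ?_
  have hone : ({j} ∩ a i).card ≤ 1 := Finset.card_le_card Finset.inter_subset_left
  have := hbal i k
  omega

theorem IsBalanced.not_blocks_univ [Fintype α] (hbal : IsBalanced a) (ha : IsAllocation a) :
    ¬ Blocks f Finset.univ a := by
  refine not_blocks_of_card_inter_add_card_le ha fun i k => ?_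
  simp only [Finset.univ_inter]
  have := hbal i k
  omega

end Deviations

section Fibers

variable {α κ : Type*} [Fintype α] [DecidableEq κ]

lemma isPartitionStructure_range_fiber {g : α → κ} (hg : Function.Surjective g) :
    IsPartitionStructure (Set.range fun k => ({j | g j = k} : Finset α)) := by
  refine ⟨?_, ?_, fun j => ⟨_, ⟨g j, rfl⟩, by simp⟩⟩
  · rintro _ ⟨k, rfl⟩
    obtain ⟨j, hj⟩ := hg k
    exact ⟨j, by simpa using hj⟩
  · rintro _ ⟨k, rfl⟩ _ ⟨l, rfl⟩ hkl
    exact Finset.disjoint_filter.2 fun j _ hjk hjl => hkl (by rw [← hjk, ← hjl])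

end Fibers

section TwoResources

variable {α : Type*}

lemma sort_map_univ_fin_two {β : Type*} [LinearOrder β] (g : Fin 2 → β) :
    ((Finset.univ : Finset (Fin 2)).val.map g).sort (· ≤ ·) =
      [min (g 0) (g 1), max (g 0) (g 1)] := by
  have hpair : [g 0, g 1].Perm [min (g 0) (g 1), max (g 0) (g 1)] := by
    rcases le_total (g 0) (g 1) with h | h
    · rw [min_eq_left h, max_eq_right h]
    · rw [min_eq_right h, max_eq_left h]
      exact List.Perm.swap _ _ _
  have hmap : (Finset.univ : Finset (Fin 2)).val.map g = ([g 0, g 1] : List β) := by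
    simp [Fin.univ_val_map]
  rw [hmap, Multiset.coe_eq_coe.2 hpair, Multiset.coe_sort]
  exact List.mergeSort_of_pairwise (by simp)

lemma kernel_fin_two (a : Fin 2 → Finset α) :
    kernel a = [max (a 0).card (a 1).card, min (a 0).card (a 1).card] := by
  rw [kernel, sort_map_univ_fin_two]
  rfl

lemma ckernel_fin_two [DecidableEq α] (c : Finset α) (a : Fin 2 → Finset α) :
    ckernel c a = [max (c ∩ a 0).card (c ∩ a 1).card, min (c ∩ a 0).card (c ∩ a 1).card] := by
  rw [ckernel, sort_map_univ_fin_two]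
  rfl

end TwoResources

/-- The index of the coalition of `exC` containing agent `j`: the coalitions are the blocks of
three consecutive agents. -/
def coalitionIndex (j : Fin 15) : Fin 5 := ⟨j / 3, by omega⟩

lemma exC_eq_range_fiber :
    exC = Set.range fun k => ({j | coalitionIndex j = k} : Finset (Fin 15)) := by
  refine Set.Subset.antisymm ?_ ?_
  · rintro c (rfl | rfl | rfl | rfl | rfl)
    exacts [⟨0, by decide⟩, ⟨1, by decide⟩, ⟨2, by decide⟩, ⟨3, by decide⟩, ⟨4, by decide⟩]
  · simp only [exC, Set.range_subset_iff, Set.mem_insert_iff, Set.mem_singleton_iff]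
    decide

lemma isAllocation_exAlloc : IsAllocation exAlloc := by
  unfold IsAllocation; decide

lemma isAllocation_exAllocBar : IsAllocation exAllocBar := by
  unfold IsAllocation; decide

lemma isBalanced_exAlloc : IsBalanced exAlloc := by
  unfold IsBalanced; decide

lemma not_blocks_of_mem_exC {f : Fin 2 → Finset (Fin 15)} {c : Finset (Fin 15)} (hc : c ∈ exC) :
    ¬ Blocks f c exAlloc := by
  refine not_blocks_of_card_inter_add_card_le isAllocation_exAlloc ?_
  rw [exC_eq_range_fiber] at hc
  obtain ⟨k, rfl⟩ := hc
  revert k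
  decide

lemma balanceDominates_exAllocBar_exAlloc : BalanceDominates exC exAllocBar exAlloc := by
  simp only [BalanceDominates, exC_eq_range_fiber, Set.forall_mem_range, Set.exists_range_iff,
    kernel_fin_two, ckernel_fin_two]
  decide

/-- Example 2: `a` is a Nash equilibrium, Pareto efficient and `C`-stable, but it is not
maximal w.r.t. `C`-balance dominance, since `ā` `C`-balance dominates it. -/
theorem stable_not_maximal_example :
    IsPartitionStructure exC ∧
    IsAllocation exAlloc ∧ Feasible exF exAlloc ∧
    (∀ j : Fin 15, ¬ Blocks exF {j} exAlloc) ∧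
    (¬ Blocks exF Finset.univ exAlloc) ∧
    (∀ c ∈ exC, ¬ Blocks exF c exAlloc) ∧
    IsAllocation exAllocBar ∧ Feasible exF exAllocBar ∧
    BalanceDominates exC exAllocBar exAlloc :=
  ⟨exC_eq_range_fiber ▸ isPartitionStructure_range_fiber (by decide),
    isAllocation_exAlloc, fun _ => Finset.subset_univ _,
    isBalanced_exAlloc.not_blocks_singleton isAllocation_exAlloc,
    isBalanced_exAlloc.not_blocks_univ isAllocation_exAlloc,
    fun _ => not_blocks_of_mem_exC,
    isAllocation_exAllocBar, fun _ => Finset.subset_univ _,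
    balanceDominates_exAllocBar_exAlloc⟩
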